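/- For every α ∈ (0,∞) there exists a constant C = C(α) > 0 such that for all t ∈ ℝ and all φ ∈ ℓ¹(Z), ‖U(t)φ‖_{ℓ^∞(Z)} ≤ C (1 + |t|)^{−ρ} ‖φ‖_{ℓ¹(Z)}, where ρ = ρ₊ = 1/3 if α ∈ (1,∞) and ρ = ρ₋ = 1/2 if α ∈ (0,1]. -/

import Mathlib

open scoped BigOperators ENNReal
open Filter Topology MeasureTheory

noncomputable section

/-- The symbol `σ(ξ) = Σ_{k=1}^∞ sin²(kξ/2) / k^{1+α}` for `J_k = k^{-(1+α)}` on `ℤ`. -/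
def sigma1 (α : ℝ) (ξ : ℝ) : ℝ :=
  ∑' k : ℕ, Real.sin (((k : ℝ) + 1) * ξ / 2) ^ 2 / ((k : ℝ) + 1) ^ (1 + α)

/-- The kernel `(K_t)_n = (1/(2π)) ∫_{-π}^{π} e^{i(nξ - σ(ξ)t)} dξ`. -/
def Kker (α t : ℝ) (n : ℤ) : ℂ :=
  (2 * Real.pi)⁻¹ •
    ∫ ξ in (-Real.pi)..Real.pi, Complex.exp (Complex.I * (((n : ℝ) * ξ - sigma1 α ξ * t) : ℝ))

/-- The propagator `(U(t)φ)_n = Σ_m (K_t)_{n-m} φ_m`. -/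
def Uprop (α t : ℝ) (φ : ℤ → ℂ) (n : ℤ) : ℂ :=
  ∑' m : ℤ, Kker α t (n - m) * φ m

lemma abel_bound (w : ℕ → ℝ) (E : ℕ → ℂ) (N : ℕ) (hE : ∀ j, ‖E j‖ ≤ 1)
    (hw0 : ∀ j, j ≤ N → 0 ≤ w j) (hw : ∀ j, j < N → w (j+1) ≤ w j) :
    ‖∑ j ∈ Finset.range (N+1), (w j : ℂ) * (E (j+1) - E j)‖ ≤ 2 * w 0 := by
  have key : ∀ n, n ≤ N →
      ‖∑ j ∈ Finset.range (n+1), (w j : ℂ) * (E (j+1) - E j) - w n * E (n+1)‖ ≤ 2 * w 0 - w n := by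
    intro n
    induction n with
    | zero =>
      intro _
      have h0 := hw0 0 (Nat.zero_le _)
      have : ∑ j ∈ Finset.range (0+1), (w j : ℂ) * (E (j+1) - E j) - w 0 * E (0+1)
        = -(w 0 * E 0) := by simp; ring
      rw [this, norm_neg, norm_mul, Complex.norm_real, Real.norm_of_nonneg h0]
      nlinarith [hE 0]
    | succ n ih =>
      intro hn
      have h1 := ih (by omega)
      have h2 := hw n (by omega)
      have : ∑ j ∈ Finset.range (n+1+1), (w j : ℂ) * (E (j+1) - E j) - w (n+1) * E (n+1+1)
        = (∑ j ∈ Finset.range (n+1), (w j : ℂ) * (E (j+1) - E j) - w n * E (n+1))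
          + ((w n - w (n+1) : ℝ) : ℂ) * E (n+1) := by
        rw [Finset.sum_range_succ]; push_cast; ring
      rw [this]
      refine (norm_add_le _ _).trans ?_
      have h3 : ‖((w n - w (n+1) : ℝ) : ℂ) * E (n+1)‖ ≤ w n - w (n+1) := by
        rw [norm_mul, Complex.norm_real, Real.norm_of_nonneg (by linarith)]
        nlinarith [hE (n+1)]
      linarith
  have h1 := key N le_rfl
  have h2 : ‖(w N : ℂ) * E (N+1)‖ ≤ w N := by
    rw [norm_mul, Complex.norm_real, Real.norm_of_nonneg (hw0 N le_rfl)]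
    nlinarith [hE (N+1), hw0 N le_rfl]
  have h3 := norm_le_norm_sub_add (∑ j ∈ Finset.range (N+1), (w j : ℂ) * (E (j+1) - E j))
    (w N * E (N+1))
  linarith

lemma exp_I_lip (u v : ℝ) :
    ‖Complex.exp (Complex.I * u) - Complex.exp (Complex.I * v)‖ ≤ |u - v| := by
  have : Complex.exp (Complex.I * u) - Complex.exp (Complex.I * v)
      = Complex.exp (Complex.I * v) * (Complex.exp (Complex.I * (u - v : ℝ)) - 1) := by
    rw [mul_sub, ← Complex.exp_add]; push_cast; ring_nf
  rw [this, norm_mul, mul_comm Complex.I (v:ℂ), Complex.norm_exp_ofReal_mul_I, one_mul]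
  exact Real.norm_exp_I_mul_ofReal_sub_one_le

lemma norm_exp_I (u : ℝ) : ‖Complex.exp (Complex.I * u)‖ = 1 := by
  rw [mul_comm, Complex.norm_exp_ofReal_mul_I]

lemma cexp_contOn {f : ℝ → ℝ} {s : Set ℝ} (hf : ContinuousOn f s) :
    ContinuousOn (fun x => Complex.exp (Complex.I * (f x : ℂ))) s :=
  Complex.continuous_exp.comp_continuousOn
    (continuousOn_const.mul (Complex.continuous_ofReal.comp_continuousOn hf))

lemma vdc1 {f : ℝ → ℝ} {a b δ : ℝ} (hab : a ≤ b) (hδ : 0 < δ)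
    (hc : ContinuousOn f (Set.Icc a b)) (hconv : ConvexOn ℝ (Set.Icc a b) f)
    (hsl : ∀ x ∈ Set.Icc a b, ∀ y ∈ Set.Icc a b, x ≤ y → δ * (y - x) ≤ f y - f x) :
    ‖∫ x in a..b, Complex.exp (Complex.I * (f x : ℂ))‖ ≤ 2 / δ := by
  rcases hab.eq_or_lt with rfl | hab'
  · simp; positivity
  have hmain : ∀ ε > 0, ‖∫ x in a..b, Complex.exp (Complex.I * (f x : ℂ))‖
      ≤ 2 / δ + ε * (b - a) := by
    intro ε hε
    have huc := isCompact_Icc.uniformContinuousOn_of_continuous hc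
    rw [Metric.uniformContinuousOn_iff] at huc
    obtain ⟨η, hη, hη'⟩ := huc ε hε
    obtain ⟨N, hN⟩ := exists_nat_gt ((b - a) / η)
    set h : ℝ := (b - a) / (N + 1) with hh
    have hNpos : (0:ℝ) < N + 1 := by positivity
    have hhpos : 0 < h := div_pos (by linarith) hNpos
    have hhη : h < η := by
      rw [hh, div_lt_iff₀ hNpos]
      rw [div_lt_iff₀ hη] at hN
      nlinarith
    have hNh : ((N:ℝ)+1) * h = b - a := by rw [hh]; field_simp
    set p : ℕ → ℝ := fun j => a + j * h with hp
    have hpsucc : ∀ j, p (j+1) = p j + h := by intro j; simp [hp]; ring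
    have hpmem : ∀ j, j ≤ N + 1 → p j ∈ Set.Icc a b := by
      intro j hj
      have : (j:ℝ) ≤ N + 1 := by exact_mod_cast hj
      have h0 : (0:ℝ) ≤ j := Nat.cast_nonneg j
      constructor
      · simp only [hp]; nlinarith
      · simp only [hp]; nlinarith
    have hp0 : p 0 = a := by simp [hp]
    have hpN : p (N+1) = b := by simp only [hp]; push_cast; linarith
    set s : ℕ → ℝ := fun j => (f (p (j+1)) - f (p j)) / h with hs
    have hsδ : ∀ j, j ≤ N → δ ≤ s j := by
      intro j hj
      have := hsl _ (hpmem j (by omega)) _ (hpmem (j+1) (by omega)) (by rw [hpsucc]; linarith)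
      rw [hpsucc] at this
      simp only [hs]
      rw [le_div_iff₀ hhpos, hpsucc]
      linarith
    have hsmono : ∀ j, j < N → s j ≤ s (j+1) := by
      intro j hj
      have := hconv.slope_mono_adjacent (hpmem j (by omega)) (hpmem (j+1+1) (by omega))
        (y := p (j+1)) (by rw [hpsucc]; linarith) (by rw [hpsucc (j+1)]; linarith)
      have e1 : p (j+1) - p j = h := by rw [hpsucc]; ring
      have e2 : p (j+1+1) - p (j+1) = h := by rw [hpsucc (j+1)]; ring
      rw [e1, e2] at this
      exact this
    set E : ℕ → ℂ := fun j => Complex.exp (Complex.I * (f (p j) : ℂ)) with hEdef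
    have hpiece : ∀ j, j ≤ N →
        ‖(∫ x in (p j)..(p (j+1)), Complex.exp (Complex.I * (f x : ℂ)))
          - (((s j)⁻¹ : ℝ) : ℂ) * ((-Complex.I) * E (j+1) - (-Complex.I) * E j)‖ ≤ ε * h := by
      intro j hj
      have hsj : 0 < s j := lt_of_lt_of_le hδ (hsδ j hj)
      have hlin : (∫ x in (p j)..(p (j+1)),
          Complex.exp (Complex.I * ((f (p j) + s j * (x - p j) : ℝ) : ℂ)))
          = (((s j)⁻¹ : ℝ) : ℂ) * ((-Complex.I) * E (j+1) - (-Complex.I) * E j) := by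
        have hd : ∀ x ∈ Set.uIcc (p j) (p (j+1)), HasDerivAt
            (fun x : ℝ => (((s j)⁻¹ : ℝ) : ℂ) * ((-Complex.I) *
              Complex.exp (Complex.I * ((f (p j) + s j * (x - p j) : ℝ) : ℂ))))
            (Complex.exp (Complex.I * ((f (p j) + s j * (x - p j) : ℝ) : ℂ))) x := by
          intro x _
          have h1 : HasDerivAt (fun x : ℝ => f (p j) + s j * (x - p j)) (s j) x := by
            simpa using (((hasDerivAt_id x).sub_const (p j)).const_mul (s j)).const_add (f (p j))
          have h2 := ((h1.ofReal_comp.const_mul Complex.I).cexp.const_mul (-Complex.I)).const_mul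
            (((s j)⁻¹ : ℝ) : ℂ)
          refine h2.congr_deriv ?_
          have : (s j : ℂ) ≠ 0 := by exact_mod_cast hsj.ne'
          have hi : (s j : ℂ)⁻¹ * s j = 1 := inv_mul_cancel₀ this
          generalize Complex.exp (Complex.I * ((f (p j) + s j * (x - p j) : ℝ) : ℂ)) = X
          rw [Complex.ofReal_inv]
          linear_combination -(X * ((s j : ℂ)⁻¹ * s j) * Complex.I_sq) + X * hi
        rw [intervalIntegral.integral_eq_sub_of_hasDerivAt hd]
        · have e1 : f (p j) + s j * (p (j+1) - p j) = f (p (j+1)) := by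
            rw [hpsucc]; simp only [hs]; rw [hpsucc]; field_simp; ring
          rw [e1]; simp only [sub_self, mul_zero, add_zero]
          simp only [hEdef]; ring
        · apply Continuous.intervalIntegrable
          fun_prop
      rw [← hlin, ← intervalIntegral.integral_sub]
      · have hle : p j ≤ p (j+1) := by rw [hpsucc]; linarith
        have := intervalIntegral.norm_integral_le_of_norm_le_const (a := p j) (b := p (j+1))
          (C := ε) (f := fun x => Complex.exp (Complex.I * (f x : ℂ))
            - Complex.exp (Complex.I * ((f (p j) + s j * (x - p j) : ℝ) : ℂ))) ?_
        · rw [hpsucc] at this ⊢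
          rwa [add_sub_cancel_left, abs_of_pos hhpos] at this
        · intro x hx
          rw [Set.uIoc_of_le hle] at hx
          refine (exp_I_lip _ _).trans ?_
          have hm1 := hpmem j (by omega)
          have hm2 := hpmem (j+1) (by omega)
          have hxm : x ∈ Set.Icc a b := ⟨hm1.1.trans hx.1.le, hx.2.trans hm2.2⟩
          have i1 := hsl _ hm1 _ hxm hx.1.le
          have i2 := hsl _ hxm _ hm2 hx.2
          have i3 : s j * (x - p j) ≤ f (p (j+1)) - f (p j) := by
            simp only [hs]; rw [div_mul_eq_mul_div, div_le_iff₀ hhpos]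
            have := hsl _ hm1 _ hm2 hle
            have hh2 := hx.2
            rw [hpsucc] at hh2
            have : 0 ≤ f (p (j+1)) - f (p j) := by nlinarith
            nlinarith
          have i4 : dist (f (p (j+1))) (f (p j)) < ε := by
            apply hη' _ hm2 _ hm1
            rw [hpsucc, Real.dist_eq, add_sub_cancel_left, abs_of_pos hhpos]; exact hhη
          rw [Real.dist_eq] at i4
          have i5 := le_abs_self (f (p (j+1)) - f (p j))
          have i6 : 0 ≤ s j * (x - p j) := mul_nonneg hsj.le (by linarith [hx.1])
          have i7 : 0 ≤ δ * (x - p j) := mul_nonneg hδ.le (by linarith [hx.1])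
          have i8 : 0 ≤ δ * (p (j+1) - x) := mul_nonneg hδ.le (by linarith [hx.2])
          rw [abs_le]; constructor <;> linarith
      · apply ContinuousOn.intervalIntegrable
        apply (cexp_contOn hc).mono
        rw [Set.uIcc_of_le (by rw [hpsucc]; linarith)]
        exact Set.Icc_subset_Icc (hpmem j (by omega)).1 (hpmem (j+1) (by omega)).2
      · apply Continuous.intervalIntegrable
        fun_prop
    have hsum : ∑ j ∈ Finset.range (N+1),
        (∫ x in (p j)..(p (j+1)), Complex.exp (Complex.I * (f x : ℂ)))
        = ∫ x in a..b, Complex.exp (Complex.I * (f x : ℂ)) := by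
      rw [intervalIntegral.sum_integral_adjacent_intervals, hp0, hpN]
      intro j hj
      apply ContinuousOn.intervalIntegrable
      apply (cexp_contOn hc).mono
      rw [Set.uIcc_of_le (by rw [hpsucc]; linarith)]
      exact Set.Icc_subset_Icc (hpmem j (by omega)).1 (hpmem (j+1) (by omega)).2
    have hab2 := abel_bound (fun j => (s j)⁻¹) (fun j => (-Complex.I) * E j) N
      (by intro j; simp [hEdef])
      (fun j hj => inv_nonneg.mpr (hδ.le.trans (hsδ j hj)))
      (fun j hj => inv_anti₀ (lt_of_lt_of_le hδ (hsδ j hj.le)) (hsmono j hj))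
    have hdiff : ‖(∫ x in a..b, Complex.exp (Complex.I * (f x : ℂ)))
        - ∑ j ∈ Finset.range (N+1), (((s j)⁻¹ : ℝ) : ℂ) *
          ((-Complex.I) * E (j+1) - (-Complex.I) * E j)‖ ≤ ε * (b - a) := by
      rw [← hsum, ← Finset.sum_sub_distrib]
      refine (norm_sum_le_of_le _ (fun j hj => hpiece j
        (by have := Finset.mem_range.mp hj; omega))).trans ?_
      rw [Finset.sum_const, Finset.card_range, nsmul_eq_mul, ← hNh]
      push_cast
      apply le_of_eq; ring
    have h0 : (s 0)⁻¹ ≤ δ⁻¹ := inv_anti₀ hδ (hsδ 0 (Nat.zero_le _))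
    have h3 := norm_le_norm_sub_add (∫ x in a..b, Complex.exp (Complex.I * (f x : ℂ)))
      (∑ j ∈ Finset.range (N+1), (((s j)⁻¹ : ℝ) : ℂ) *
          ((-Complex.I) * E (j+1) - (-Complex.I) * E j))
    rw [div_eq_mul_inv]
    linarith
  apply le_of_forall_pos_le_add
  intro ε hε
  have hba : 0 < b - a := by linarith
  have := hmain (ε / (b - a)) (by positivity)
  rwa [div_mul_cancel₀ _ hba.ne'] at this

lemma vdc2R {f : ℝ → ℝ} {a b m : ℝ} (hab : a ≤ b) (hm : 0 < m)
    (hc : ContinuousOn f (Set.Icc a b))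
    (hconv : ConvexOn ℝ (Set.Icc a b) (fun x => f x - m / 2 * x ^ 2))
    (hmin : ∀ x ∈ Set.Icc a b, f a ≤ f x) :
    ‖∫ x in a..b, Complex.exp (Complex.I * (f x : ℂ))‖ ≤ 4 / √m := by
  have hsm : 0 < √m := Real.sqrt_pos.mpr hm
  have triv : ∀ c d : ℝ, c ≤ d →
      ‖∫ x in c..d, Complex.exp (Complex.I * (f x : ℂ))‖ ≤ d - c := by
    intro c d hcd
    have := intervalIntegral.norm_integral_le_of_norm_le_const (a := c) (b := d)
          (C := 1) (f := fun x => Complex.exp (Complex.I * (f x : ℂ))) 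
          (fun x _ => (norm_exp_I _).le)
    rwa [one_mul, abs_of_nonneg (by linarith)] at this
  set δ := 2 / √m with hδ
  have hδpos : 0 < δ := by positivity
  have h4 : 4 / √m = δ + δ := by rw [hδ]; ring
  by_cases hb : b ≤ a + δ
  · have := triv a b hab
    linarith
  push Not at hb
  have hfconv : ConvexOn ℝ (Set.Icc a b) f := by
    have hsq : ConvexOn ℝ (Set.Icc a b) (fun x : ℝ => m / 2 * x ^ 2) := by
      have : ConvexOn ℝ (Set.univ : Set ℝ) (fun x : ℝ => x ^ 2) := even_two.convexOn_pow
      exact (this.subset (Set.subset_univ _) (convex_Icc a b)).smul (by positivity : 0 ≤ m/2)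
    have := hconv.add hsq
    refine this.congr ?_
    intro x _; simp
  have hsub : Set.Icc (a+δ) b ⊆ Set.Icc a b := Set.Icc_subset_Icc (by linarith) le_rfl
  have h1 := vdc1 (f := f) (a := a + δ) (b := b) (δ := m / 2 * δ) hb.le (by positivity)
    (hc.mono hsub) (hfconv.subset hsub (convex_Icc _ _)) (by
      intro x hx y hy hxy
      rcases hxy.eq_or_lt with rfl | hxy
      · simp
      have hax : a < x := by linarith [hx.1]
      have := hconv.slope_mono_adjacent (x := a) (y := x) (z := y) ⟨le_rfl, hab⟩ (hsub hy) hax hxy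
      have hf1 := hmin x (hsub hx)
      have d1 : 0 < x - a := by linarith
      have d2 : 0 < y - x := by linarith
      have e1 : -(m/2) * (x + a) ≤ (f x - m / 2 * x ^ 2 - (f a - m / 2 * a ^ 2)) / (x - a) := by
        rw [le_div_iff₀ d1]; nlinarith
      have e2 := e1.trans this
      rw [le_div_iff₀ d2] at e2
      have e3 : m / 2 * δ * (y - x) ≤ m / 2 * (y - a) * (y - x) := by
        have : δ ≤ y - a := by linarith [hx.1]
        gcongr
      nlinarith)
  have h2 := triv a (a+δ) (by linarith)
  have h3 : 2 / (m / 2 * δ) = δ := by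
    rw [hδ]
    have : m = √m * √m := (Real.mul_self_sqrt hm.le).symm
    field_simp
    nlinarith
  rw [h3] at h1
  have hI := cexp_contOn hc
  rw [← intervalIntegral.integral_add_adjacent_intervals (b := a + δ), h4]
  · refine (norm_add_le _ _).trans ?_
    linarith
  · apply ContinuousOn.intervalIntegrable
    rw [Set.uIcc_of_le (by linarith)]
    exact hI.mono (Set.Icc_subset_Icc le_rfl (by linarith))
  · apply ContinuousOn.intervalIntegrable
    rw [Set.uIcc_of_le (by linarith)]
    exact hI.mono hsub

lemma vdc2 {f : ℝ → ℝ} {a b m : ℝ} (hab : a ≤ b) (hm : 0 < m)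
    (hc : ContinuousOn f (Set.Icc a b))
    (hconv : ConvexOn ℝ (Set.Icc a b) (fun x => f x - m / 2 * x ^ 2)) :
    ‖∫ x in a..b, Complex.exp (Complex.I * (f x : ℂ))‖ ≤ 8 / √m := by
  obtain ⟨c, hcm, hcmin⟩ := isCompact_Icc.exists_isMinOn (Set.nonempty_Icc.mpr hab) hc
  have hcmin' : ∀ x ∈ Set.Icc a b, f c ≤ f x := fun x hx => hcmin hx
  have hI := cexp_contOn hc
  have s1 : Set.Icc c b ⊆ Set.Icc a b := Set.Icc_subset_Icc hcm.1 le_rfl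
  have s2 : Set.Icc a c ⊆ Set.Icc a b := Set.Icc_subset_Icc le_rfl hcm.2
  have h1 := vdc2R (f := f) hcm.2 hm (hc.mono s1) (hconv.subset s1 (convex_Icc _ _))
    (fun x hx => hcmin' x (s1 hx))
  have mneg : ∀ x ∈ Set.Icc (-c) (-a), -x ∈ Set.Icc a c := by
    intro x hx
    exact ⟨by linarith [hx.2], by linarith [hx.1]⟩
  have h2 := vdc2R (f := fun x => f (-x)) (a := -c) (b := -a) (m := m) (by linarith [hcm.1]) hm
    ((hc.mono s2).comp continuous_neg.continuousOn mneg) (by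
      refine ⟨convex_Icc _ _, ?_⟩
      intro x hx y hy u v hu hv huv
      have := (hconv.subset s2 (convex_Icc _ _)).2 (mneg x hx) (mneg y hy) hu hv huv
      simp only [smul_eq_mul] at this ⊢
      have e : -(u * x + v * y) = u * -x + v * -y := by ring
      rw [e]
      have e2 : (u * x + v * y)^2 = (u * -x + v * -y)^2 := by ring
      rw [e2, ← neg_sq x, ← neg_sq y]
      exact this)
    (fun x hx => by simpa using hcmin' _ (s2 (mneg x hx)))
  have h3 : ∫ x in (-c)..(-a), Complex.exp (Complex.I * (f (-x) : ℂ))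
      = ∫ x in a..c, Complex.exp (Complex.I * (f x : ℂ)) := by
    rw [intervalIntegral.integral_comp_neg (fun x => Complex.exp (Complex.I * (f x : ℂ)))]
    simp
  rw [h3] at h2
  rw [← intervalIntegral.integral_add_adjacent_intervals (b := c)]
  · refine (norm_add_le _ _).trans ?_
    have : 8 / √m = 4 / √m + 4 / √m := by ring
    linarith
  · apply ContinuousOn.intervalIntegrable
    rw [Set.uIcc_of_le hcm.1]
    exact hI.mono s2
  · apply ContinuousOn.intervalIntegrable
    rw [Set.uIcc_of_le hcm.2]
    exact hI.mono s1

lemma norm_int_neg (f : ℝ → ℝ) (a b : ℝ) :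
    ‖∫ x in a..b, Complex.exp (Complex.I * ((-f x : ℝ) : ℂ))‖
      = ‖∫ x in a..b, Complex.exp (Complex.I * (f x : ℂ))‖ := by
  have : ∀ x, Complex.exp (Complex.I * ((-f x : ℝ) : ℂ))
      = (starRingEnd ℂ) (Complex.exp (Complex.I * (f x : ℂ))) := by
    intro x
    rw [← Complex.exp_conj]; simp
  simp_rw [this]
  have h : (∫ x in a..b, (starRingEnd ℂ) (Complex.exp (Complex.I * (f x : ℂ))))
      = (starRingEnd ℂ) (∫ x in a..b, Complex.exp (Complex.I * (f x : ℂ))) := by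
    rw [intervalIntegral, intervalIntegral, map_sub, integral_conj, integral_conj]
  rw [h, RCLike.norm_conj]

/-- Main consumable form: phase `n x - t g x` with `g` strongly convex or concave. -/
lemma vdc_phase {g : ℝ → ℝ} {a b m : ℝ} (n t : ℝ) (hab : a ≤ b) (hm : 0 < m) (ht : t ≠ 0)
    (hc : ContinuousOn g (Set.Icc a b))
    (hconv : ConvexOn ℝ (Set.Icc a b) (fun x => g x - m / 2 * x ^ 2) ∨
      ConvexOn ℝ (Set.Icc a b) (fun x => - g x - m / 2 * x ^ 2)) :
    ‖∫ x in a..b, Complex.exp (Complex.I * ((n * x - g x * t : ℝ) : ℂ))‖ ≤ 8 / √(m * |t|) := by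
  have hlin : ∀ k : ℝ, ConvexOn ℝ (Set.Icc a b) (fun x : ℝ => k * x) := by
    intro k
    refine ⟨convex_Icc _ _, ?_⟩
    intro x _ y _ u v _ _ _
    simp only [smul_eq_mul]
    apply le_of_eq; ring
  have ht' : 0 < |t| := abs_pos.mpr ht
  have P : ∀ (G : ℝ → ℝ) (k : ℝ), ContinuousOn G (Set.Icc a b) →
      ConvexOn ℝ (Set.Icc a b) (fun x => G x - m / 2 * x ^ 2) →
      ‖∫ x in a..b, Complex.exp (Complex.I * ((k * x + |t| * G x : ℝ) : ℂ))‖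
        ≤ 8 / √(m * |t|) := by
    intro G k hG hGc
    apply vdc2 hab (by positivity)
    · exact (continuousOn_const.mul continuousOn_id).add (continuousOn_const.mul hG)
    · refine ((hlin k).add (hGc.smul ht'.le)).congr ?_
      intro x _
      simp only [Pi.add_apply, smul_eq_mul]
      ring
  rcases hconv with h | h
  · rcases lt_or_gt_of_ne ht with h0 | h0
    · have := P g n hc h
      rw [abs_of_neg h0] at this ⊢
      convert this using 6
      push_cast; ring
    · have := P g (-n) hc h
      rw [abs_of_pos h0] at this ⊢
      rw [← norm_int_neg]
      convert this using 6
      push_cast; ring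
  · rcases lt_or_gt_of_ne ht with h0 | h0
    · have := P (fun x => - g x) (-n) hc.neg h
      rw [abs_of_neg h0] at this ⊢
      rw [← norm_int_neg]
      convert this using 6
      push_cast; ring
    · have := P (fun x => - g x) n hc.neg h
      rw [abs_of_pos h0] at this ⊢
      convert this using 6
      push_cast; ring

lemma convexOn_of_d2 {D : Set ℝ} (hD : Convex ℝ D) {f f' f'' : ℝ → ℝ}
    (h1 : ∀ x, HasDerivAt f (f' x) x) (h2 : ∀ x, HasDerivAt f' (f'' x) x)
    (h3 : ∀ x ∈ D, 0 ≤ f'' x) : ConvexOn ℝ D f := by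
  have e1 : deriv f = f' := funext fun x => (h1 x).deriv
  have e2 : deriv f' = f'' := funext fun x => (h2 x).deriv
  apply convexOn_of_deriv2_nonneg' hD
  · exact fun x _ => (h1 x).differentiableAt.differentiableWithinAt
  · rw [e1]; exact fun x _ => (h2 x).differentiableAt.differentiableWithinAt
  · intro x hx
    have : deriv^[2] f x = f'' x := by
      rw [Function.iterate_succ, Function.iterate_one, Function.comp, e1, e2]
    rw [this]; exact h3 x hx

lemma summable_shift_rpow {p : ℝ} (hp : 1 < p) :
    Summable (fun k : ℕ => (((k:ℝ) + 1) ^ p)⁻¹) := by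
  have := (summable_nat_add_iff 1).mpr (Real.summable_nat_rpow_inv.mpr hp)
  simpa using this

lemma summable_bdd_rpow {p B : ℝ} (hp : 1 < p) {d : ℕ → ℝ} (hd : ∀ k, |d k| ≤ B) :
    Summable (fun k : ℕ => d k / ((k:ℝ) + 1) ^ p) := by
  refine Summable.of_norm_bounded ((summable_shift_rpow hp).mul_left B) ?_
  intro k
  have : 0 < ((k:ℝ) + 1) ^ p := by positivity
  rw [Real.norm_eq_abs, abs_div, abs_of_pos this, div_eq_mul_inv]
  gcongr
  exact hd k

lemma super1 {α B : ℝ} (hα : 1 < α) {d : ℕ → ℝ} (hd : ∀ k, |d k| ≤ B)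
    (h : ∀ r : ℝ, 0 < r → r < 1 → 0 ≤ ∑' k : ℕ, d k * r ^ (k+1) / ((k:ℝ)+1)) :
    0 ≤ ∑' k : ℕ, d k / ((k:ℝ)+1) ^ α := by
  set F : ℕ → ℝ → ℝ := fun k u =>
    u ^ ((α - 1) - 1) * Real.exp (-(((k:ℝ)+1) * u)) * (d k / ((k:ℝ)+1)) with hF
  have hα1 : 0 < α - 1 := by linarith
  have hΓ : 0 < Real.Gamma (α - 1) := Real.Gamma_pos_of_pos hα1
  have hval : ∀ k : ℕ, ∀ c : ℝ, ∫ u in Set.Ioi (0:ℝ),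
      u ^ ((α - 1) - 1) * Real.exp (-(((k:ℝ)+1) * u)) * (c / ((k:ℝ)+1))
      = Real.Gamma (α-1) * (c / ((k:ℝ)+1) ^ α) := by
    intro k c
    have hk : 0 < (k:ℝ)+1 := by positivity
    rw [integral_mul_const, Real.integral_rpow_mul_exp_neg_mul_Ioi hα1 hk, one_div,
      Real.inv_rpow hk.le, Real.rpow_sub_one hk.ne']
    have : 0 < ((k:ℝ)+1)^α := by positivity
    field_simp
  have hint0 : ∀ k : ℕ, IntegrableOn
      (fun u : ℝ => u ^ ((α - 1) - 1) * Real.exp (-(((k:ℝ)+1) * u))) (Set.Ioi 0) := by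
    intro k
    have hk : 0 < (k:ℝ)+1 := by positivity
    apply Integrable.of_integral_ne_zero
    rw [Real.integral_rpow_mul_exp_neg_mul_Ioi hα1 hk]
    positivity
  have hInt : ∀ k, Integrable (F k) (volume.restrict (Set.Ioi 0)) := by
    intro k
    exact (hint0 k).mul_const _
  have hs : HasSum (fun k => ∫ u in Set.Ioi (0:ℝ), F k u)
      (∫ u in Set.Ioi (0:ℝ), ∑' k, F k u) := by
    apply hasSum_integral_of_summable_integral_norm hInt
    have : ∀ k, ∫ u in Set.Ioi (0:ℝ), ‖F k u‖ = Real.Gamma (α-1) * (|d k| / ((k:ℝ)+1) ^ α) := by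
      intro k
      rw [← hval]
      apply setIntegral_congr_fun measurableSet_Ioi
      intro u hu
      have hu : 0 < u := hu
      have hk : 0 < (k:ℝ)+1 := by positivity
      simp only [hF]
      rw [norm_mul, Real.norm_of_nonneg (by positivity), Real.norm_eq_abs, abs_div, abs_of_pos hk]
    simp_rw [this]
    exact (summable_bdd_rpow (B := B) hα (fun k => by rw [abs_abs]; exact hd k)).mul_left _
  have hpos : 0 ≤ ∫ u in Set.Ioi (0:ℝ), ∑' k, F k u := by
    apply setIntegral_nonneg measurableSet_Ioi
    intro u hu
    have hu : 0 < u := hu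
    have := h (Real.exp (-u)) (Real.exp_pos _) (by rw [Real.exp_lt_one_iff]; linarith)
    have e : ∀ k, F k u = u ^ ((α-1)-1) * (d k * (Real.exp (-u)) ^ (k+1) / ((k:ℝ)+1)) := by
      intro k
      simp only [hF]
      rw [← Real.exp_nat_mul]
      have : -(((k:ℝ)+1) * u) = ((k+1 : ℕ):ℝ) * -u := by push_cast; ring
      rw [this]; ring
    simp_rw [e]
    rw [tsum_mul_left]
    exact mul_nonneg (by positivity) this
  rw [← hs.tsum_eq] at hpos
  simp only [hF, hval] at hpos
  rw [tsum_mul_left] at hpos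
  exact nonneg_of_mul_nonneg_right hpos hΓ

lemma bern_int {α : ℝ} (h0 : 0 < α) (h1 : α < 1) :
    IntegrableOn (fun u : ℝ => u ^ (α - 2) * (1 - Real.exp (-u))) (Set.Ioi 0) := by
  have hm : Measurable (fun u : ℝ => u ^ (α - 2) * (1 - Real.exp (-u))) := by fun_prop
  rw [← Set.Ioc_union_Ioi_eq_Ioi (zero_le_one' ℝ)]
  apply IntegrableOn.union
  · have : IntegrableOn (fun u : ℝ => u ^ (α - 1)) (Set.Ioc 0 1) := by
      rw [← intervalIntegrable_iff_integrableOn_Ioc_of_le zero_le_one]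
      exact intervalIntegral.intervalIntegrable_rpow' (by linarith)
    refine Integrable.mono' this hm.aestronglyMeasurable ?_
    refine (ae_restrict_iff' measurableSet_Ioc).mpr (ae_of_all _ ?_)
    intro u hu
    have hu0 : 0 < u := hu.1
    have e1 : Real.exp (-u) ≤ 1 := by rw [Real.exp_le_one_iff]; linarith
    have e2 := Real.add_one_le_exp (-u)
    rw [Real.norm_of_nonneg (mul_nonneg (by positivity) (by linarith))]
    have : u ^ (α - 1) = u ^ (α - 2) * u := by
      rw [← Real.rpow_add_one hu0.ne']; ring_nf
    rw [this]
    gcongr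
    linarith
  · refine Integrable.mono' (integrableOn_Ioi_rpow_of_lt (a := α - 2) (by linarith) one_pos)
      hm.aestronglyMeasurable ?_
    refine (ae_restrict_iff' measurableSet_Ioi).mpr (ae_of_all _ ?_)
    intro u hu
    have hu0 : 0 < u := lt_trans one_pos hu
    have e1 : Real.exp (-u) ≤ 1 := by rw [Real.exp_le_one_iff]; linarith
    have e2 := Real.exp_pos (-u)
    rw [Real.norm_of_nonneg (mul_nonneg (by positivity) (by linarith))]
    have : 0 < u ^ (α-2) := by positivity
    nlinarith

lemma super2 {α B : ℝ} (hα0 : 0 < α) (hα : α ≤ 1) {d : ℕ → ℝ} (hd : ∀ k, |d k| ≤ B)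
    (h : ∀ r : ℝ, 0 ≤ r → r < 1 → 0 ≤ ∑' k : ℕ, d k * (1 - r ^ (k+1)) / ((k:ℝ)+1)^2) :
    0 ≤ ∑' k : ℕ, d k / ((k:ℝ)+1) ^ (1 + α) := by
  rcases hα.eq_or_lt with rfl | hα1
  · have := h 0 le_rfl one_pos
    convert this using 3 with k
    norm_num
  set g : ℝ → ℝ := fun u => u ^ (α - 2) * (1 - Real.exp (-u)) with hg
  have hgpos : ∀ u, 0 < u → 0 < g u := by
    intro u hu
    have : Real.exp (-u) < 1 := by rw [Real.exp_lt_one_iff]; linarith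
    exact mul_pos (by positivity) (by linarith)
  have hgint : IntegrableOn g (Set.Ioi 0) := bern_int hα0 hα1
  set M : ℝ := ∫ u in Set.Ioi (0:ℝ), g u with hM
  have hMpos : 0 < M := by
    rw [hM, setIntegral_pos_iff_support_of_nonneg_ae]
    · have : Set.Ioi (0:ℝ) ⊆ Function.support g ∩ Set.Ioi 0 :=
        fun u hu => ⟨(hgpos u hu).ne', hu⟩
      refine lt_of_lt_of_le ?_ (measure_mono this)
      simp
    · exact (ae_restrict_iff' measurableSet_Ioi).mpr (ae_of_all _ fun u hu => (hgpos u hu).le)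
    · exact hgint
  set F : ℕ → ℝ → ℝ := fun k u =>
    g (((k:ℝ)+1) * u) * (d k * ((k:ℝ)+1)^(-α)) with hF
  have hval : ∀ k : ℕ, ∀ c : ℝ, ∫ u in Set.Ioi (0:ℝ),
      g (((k:ℝ)+1) * u) * (c * ((k:ℝ)+1)^(-α)) = M * (c / ((k:ℝ)+1) ^ (1+α)) := by
    intro k c
    have hk : 0 < (k:ℝ)+1 := by positivity
    rw [integral_mul_const, integral_comp_mul_left_Ioi g 0 hk, mul_zero, ← hM, smul_eq_mul,
      Real.rpow_neg hk.le, Real.rpow_add hk, Real.rpow_one]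
    have : 0 < ((k:ℝ)+1)^α := by positivity
    field_simp
  have hInt : ∀ k, Integrable (F k) (volume.restrict (Set.Ioi 0)) := by
    intro k
    have hk : 0 < (k:ℝ)+1 := by positivity
    have := (integrableOn_Ioi_comp_mul_left_iff g 0 hk).mpr (by rwa [mul_zero])
    exact Integrable.mul_const this _
  have hs : HasSum (fun k => ∫ u in Set.Ioi (0:ℝ), F k u)
      (∫ u in Set.Ioi (0:ℝ), ∑' k, F k u) := by
    apply hasSum_integral_of_summable_integral_norm hInt
    have : ∀ k, ∫ u in Set.Ioi (0:ℝ), ‖F k u‖ = M * (|d k| / ((k:ℝ)+1) ^ (1+α)) := by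
      intro k
      rw [← hval]
      apply setIntegral_congr_fun measurableSet_Ioi
      intro u hu
      have hu : 0 < u := hu
      have hk : 0 < (k:ℝ)+1 := by positivity
      have hk' : 0 < ((k:ℝ)+1)^(-α) := by positivity
      simp only [hF]
      rw [norm_mul, Real.norm_of_nonneg (hgpos _ (by positivity)).le, Real.norm_eq_abs, abs_mul,
        abs_of_pos hk']
    simp_rw [this]
    exact (summable_bdd_rpow (B := B) (by linarith) 
      (fun k => by rw [abs_abs]; exact hd k)).mul_left _
  have hpos : 0 ≤ ∫ u in Set.Ioi (0:ℝ), ∑' k, F k u := by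
    apply setIntegral_nonneg measurableSet_Ioi
    intro u hu
    have hu : 0 < u := hu
    have := h (Real.exp (-u)) (Real.exp_pos _).le (by rw [Real.exp_lt_one_iff]; linarith)
    have e : ∀ k, F k u = u ^ (α-2) * (d k * (1 - (Real.exp (-u)) ^ (k+1)) / ((k:ℝ)+1)^2) := by
      intro k
      have hk : 0 < (k:ℝ)+1 := by positivity
      simp only [hF, hg]
      rw [← Real.exp_nat_mul]
      have e1 : -(((k:ℝ)+1) * u) = ((k+1 : ℕ):ℝ) * -u := by push_cast; ring
      have e2 : ((k:ℝ)+1)^(α-2) * ((k:ℝ)+1)^(-α) = 1/((k:ℝ)+1)^2 := by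
        rw [← Real.rpow_add hk, show α - 2 + -α = -(2:ℕ) by push_cast; ring, Real.rpow_neg hk.le,
          Real.rpow_natCast, one_div]
      rw [e1, Real.mul_rpow hk.le hu.le]
      linear_combination (u ^ (α-2) * (1 - Real.exp (((k+1 : ℕ):ℝ) * -u)) * d k) * e2
    simp_rw [e]
    rw [tsum_mul_left]
    exact mul_nonneg (by positivity) this
  rw [← hs.tsum_eq] at hpos
  simp only [hF, hval] at hpos
  rw [tsum_mul_left] at hpos
  exact nonneg_of_mul_nonneg_right hpos hMpos

/-- convexity transfers through a nonnegativity-preserving series transform -/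
lemma convex_transfer {s : Set ℝ} {b : ℕ → ℝ → ℝ} {w : ℕ → ℝ} (hs : Convex ℝ s)
    (hb : ∀ x ∈ s, ∃ B, ∀ k, |b k x| ≤ B)
    (hw : ∀ x ∈ s, Summable (fun k => b k x * w k))
    (hpos : ∀ (d : ℕ → ℝ) (B : ℝ), (∀ k, |d k| ≤ B) → 
      (∀ x y u v, x ∈ s → y ∈ s → 0 ≤ u → 0 ≤ v → u + v = 1 →
        (∀ k, d k = u * b k x + v * b k y - b k (u * x + v * y)) → 0 ≤ ∑' k, d k * w k)) :
    ConvexOn ℝ s (fun x => ∑' k, b k x * w k) := by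
  refine ⟨hs, ?_⟩
  intro x hx y hy u v hu hv huv
  have hz := hs hx hy hu hv huv
  obtain ⟨B1, h1⟩ := hb x hx
  obtain ⟨B2, h2⟩ := hb y hy
  obtain ⟨B3, h3⟩ := hb _ hz
  simp only [smul_eq_mul] at *
  have := hpos (fun k => u * b k x + v * b k y - b k (u * x + v * y)) (u * B1 + v * B2 + B3) (by
    intro k
    refine (abs_sub _ _).trans ?_
    refine add_le_add ((abs_add_le _ _).trans ?_) (h3 k)
    rw [abs_mul, abs_mul, abs_of_nonneg hu, abs_of_nonneg hv]
    have := h1 k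
    have := h2 k
    gcongr) x y u v hx hy hu hv huv (fun k => rfl)
  have e : ∀ k, (u * b k x + v * b k y - b k (u * x + v * y)) * w k
    = u * (b k x * w k) + v * (b k y * w k) - b k (u * x + v * y) * w k := by intro k; ring
  simp_rw [e] at this
  rw [Summable.tsum_sub (((hw x hx).mul_left u).add ((hw y hy).mul_left v)) (hw _ hz),
    Summable.tsum_add ((hw x hx).mul_left u) ((hw y hy).mul_left v), tsum_mul_left,
    tsum_mul_left] at this
  linarith

lemma convex_series {s : Set ℝ} {b : ℕ → ℝ → ℝ} {w : ℕ → ℝ}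
    (hc : ConvexOn ℝ s (fun x => ∑' k, b k x * w k))
    (hw : ∀ x ∈ s, Summable (fun k => b k x * w k)) {x y u v : ℝ} (hx : x ∈ s) (hy : y ∈ s)
    (hu : 0 ≤ u) (hv : 0 ≤ v) (huv : u + v = 1) :
    0 ≤ ∑' k, (u * b k x + v * b k y - b k (u * x + v * y)) * w k := by
  have hz := hc.1 hx hy hu hv huv
  have := hc.2 hx hy hu hv huv
  simp only [smul_eq_mul] at *
  have e : ∀ k, (u * b k x + v * b k y - b k (u * x + v * y)) * w k
    = u * (b k x * w k) + v * (b k y * w k) - b k (u * x + v * y) * w k := by intro k; ring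
  simp_rw [e]
  rw [Summable.tsum_sub (((hw x hx).mul_left u).add ((hw y hy).mul_left v)) (hw _ hz),
    Summable.tsum_add ((hw x hx).mul_left u) ((hw y hy).mul_left v), tsum_mul_left,
    tsum_mul_left]
  linarith

def qk (r ξ : ℝ) : ℝ := r * (Real.cos ξ - r) / (1 - 2 * r * Real.cos ξ + r ^ 2)

lemma den_pos {r : ℝ} (h0 : 0 ≤ r) (h1 : r < 1) (ξ : ℝ) : 0 < 1 - 2 * r * Real.cos ξ + r ^ 2 := by
  have := Real.cos_le_one ξ
  nlinarith [sq_nonneg (1 - r), mul_nonneg h0 (sub_nonneg.mpr this), mul_pos (sub_pos.mpr h1) (sub_pos.mpr h1)]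

lemma den_le {r : ℝ} (h0 : 0 ≤ r) (ξ : ℝ) : 1 - 2 * r * Real.cos ξ + r ^ 2 ≤ (1 + r)^2 := by
  have := Real.neg_one_le_cos ξ
  nlinarith

lemma geo_hasSum {r : ℝ} (h0 : 0 ≤ r) (h1 : r < 1) (ξ : ℝ) :
    HasSum (fun k : ℕ => r ^ (k+1) * Real.cos (((k:ℝ)+1) * ξ)) (qk r ξ) := by
  set z : ℂ := r * Complex.exp (ξ * Complex.I) with hz
  have hzn : ‖z‖ < 1 := by
    rw [hz, norm_mul, Complex.norm_exp_ofReal_mul_I, Complex.norm_real, Real.norm_of_nonneg h0]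
    linarith
  have hs := ((hasSum_geometric_of_norm_lt_one hzn).mul_left z)
  have hre := Complex.hasSum_re hs
  have e1 : ∀ k : ℕ, (z * z ^ k).re = r ^ (k+1) * Real.cos (((k:ℝ)+1) * ξ) := by
    intro k
    rw [← pow_succ', hz, mul_pow, ← Complex.exp_nat_mul]
    have : ((k+1 : ℕ) : ℂ) * (ξ * Complex.I) = (((((k:ℝ)+1) * ξ : ℝ)) : ℂ) * Complex.I := by
      push_cast; ring
    rw [this, ← Complex.ofReal_pow, Complex.re_ofReal_mul, Complex.exp_ofReal_mul_I_re]
  have e2 : (z * (1 - z)⁻¹).re = qk r ξ := by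
    have hre : z.re = r * Real.cos ξ := by
      rw [hz, Complex.re_ofReal_mul, Complex.exp_ofReal_mul_I_re]
    have him : z.im = r * Real.sin ξ := by
      rw [hz, Complex.im_ofReal_mul, Complex.exp_ofReal_mul_I_im]
    have hD : Complex.normSq (1 - z) = 1 - 2 * r * Real.cos ξ + r ^ 2 := by
      rw [Complex.normSq_apply]
      simp only [Complex.sub_re, Complex.sub_im, Complex.one_re, Complex.one_im, hre, him]
      nlinarith [Real.sin_sq_add_cos_sq ξ]
    have hDp := den_pos h0 h1 ξ
    rw [Complex.mul_re, Complex.inv_re, Complex.inv_im, hD, qk]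
    simp only [Complex.sub_re, Complex.sub_im, Complex.one_re, Complex.one_im, hre, him]
    generalize 1 - 2 * r * Real.cos ξ + r ^ 2 = D at hDp
    have hne := hDp.ne'
    field_simp
    linear_combination (-r^2) * Real.sin_sq_add_cos_sq ξ
  rw [e2] at hre
  simp_rw [e1] at hre
  exact hre

lemma qk_deriv {r : ℝ} (h0 : 0 ≤ r) (h1 : r < 1) (ξ : ℝ) :
    HasDerivAt (qk r) (-(r * (1 - r^2) * Real.sin ξ) / (1 - 2 * r * Real.cos ξ + r ^ 2)^2) ξ := by
  have hD := den_pos h0 h1 ξ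
  have hn : HasDerivAt (fun ξ => r * (Real.cos ξ - r)) (r * (-Real.sin ξ)) ξ :=
    ((Real.hasDerivAt_cos ξ).sub_const r).const_mul r
  have hd : HasDerivAt (fun ξ => 1 - 2 * r * Real.cos ξ + r ^ 2) (-(2 * r * (-Real.sin ξ))) ξ :=
    (((Real.hasDerivAt_cos ξ).const_mul (2 * r)).const_sub 1).add_const _
  refine (hn.div hd hD.ne').congr_deriv ?_
  congr 1
  ring

def Ak (r ξ : ℝ) : ℝ := ∑' k : ℕ, r ^ (k+1) / ((k:ℝ)+1) * Real.sin (((k:ℝ)+1) * ξ)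
def Hk (r ξ : ℝ) : ℝ := ∑' k : ℕ, r ^ (k+1) / ((k:ℝ)+1)^2 * (1 - Real.cos (((k:ℝ)+1) * ξ))

lemma geo_summable {r : ℝ} (h0 : 0 ≤ r) (h1 : r < 1) : Summable (fun k : ℕ => r ^ (k+1)) :=
  (summable_nat_add_iff 1).mpr (summable_geometric_of_lt_one h0 h1)

lemma Ak_summable {r : ℝ} (h0 : 0 ≤ r) (h1 : r < 1) (ξ : ℝ) :
    Summable (fun k : ℕ => r ^ (k+1) / ((k:ℝ)+1) * Real.sin (((k:ℝ)+1) * ξ)) := by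
  refine Summable.of_norm_bounded (geo_summable h0 h1) fun k => ?_
  rw [norm_mul, Real.norm_of_nonneg (by positivity)]
  have hk : r ^ (k+1) / ((k:ℝ)+1) ≤ r^(k+1) :=
    div_le_self (by positivity) (by linarith [Nat.cast_nonneg (α := ℝ) k])
  have h2 : ‖Real.sin (((k:ℝ)+1) * ξ)‖ ≤ 1 := Real.abs_sin_le_one _
  have : 0 ≤ r ^ (k+1) / ((k:ℝ)+1) := by positivity
  nlinarith

lemma Ak_deriv {r : ℝ} (h0 : 0 ≤ r) (h1 : r < 1) (ξ : ℝ) :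
    HasDerivAt (Ak r) (qk r ξ) ξ := by
  rw [← (geo_hasSum h0 h1 ξ).tsum_eq]
  refine hasDerivAt_tsum (u := fun k : ℕ => r ^ (k+1))
    (g := fun (k:ℕ) ξ => r ^ (k+1) / ((k:ℝ)+1) * Real.sin (((k:ℝ)+1) * ξ))
    (g' := fun (k:ℕ) ξ => r ^ (k+1) * Real.cos (((k:ℝ)+1) * ξ)) (geo_summable h0 h1) ?_ ?_
    (Ak_summable h0 h1 0) ξ
  · intro k y
    have hk : 0 < (k:ℝ)+1 := by positivity
    have := (((hasDerivAt_id y).const_mul ((k:ℝ)+1)).sin).const_mul (r ^ (k+1) / ((k:ℝ)+1))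
    refine this.congr_deriv ?_
    simp only [id]
    field_simp
  · intro k y
    rw [norm_mul, Real.norm_of_nonneg (by positivity)]
    have h2 : ‖Real.cos (((k:ℝ)+1) * y)‖ ≤ 1 := Real.abs_cos_le_one _
    have : 0 ≤ r ^ (k+1) := by positivity
    nlinarith

lemma Hk_deriv {r : ℝ} (h0 : 0 ≤ r) (h1 : r < 1) (ξ : ℝ) :
    HasDerivAt (Hk r) (Ak r ξ) ξ := by
  refine hasDerivAt_tsum (u := fun k : ℕ => r ^ (k+1))
    (g := fun (k:ℕ) ξ => r ^ (k+1) / ((k:ℝ)+1)^2 * (1 - Real.cos (((k:ℝ)+1) * ξ)))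
    (g' := fun (k:ℕ) ξ => r ^ (k+1) / ((k:ℝ)+1) * Real.sin (((k:ℝ)+1) * ξ))
    (geo_summable h0 h1) ?_ ?_ (y₀ := 0) (by simp) ξ
  · intro k y
    have hk : 0 < (k:ℝ)+1 := by positivity
    have := ((((hasDerivAt_id y).const_mul ((k:ℝ)+1)).cos).const_sub 1).const_mul
      (r ^ (k+1) / ((k:ℝ)+1)^2)
    refine this.congr_deriv ?_
    simp only [id]
    field_simp
  · intro k y
    rw [norm_mul, Real.norm_of_nonneg (by positivity)]
    have hk : r ^ (k+1) / ((k:ℝ)+1) ≤ r^(k+1) :=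
      div_le_self (by positivity) (by linarith [Nat.cast_nonneg (α := ℝ) k])
    have h2 : ‖Real.sin (((k:ℝ)+1) * y)‖ ≤ 1 := Real.abs_sin_le_one _
    have : 0 ≤ r ^ (k+1) / ((k:ℝ)+1) := by positivity
    nlinarith

lemma Ak_conv {r : ℝ} (h0 : 0 ≤ r) (h1 : r < 1) :
    ConvexOn ℝ (Set.Icc 0 Real.pi) (fun ξ => (r - r^2) / 8 * Real.sin ξ - Ak r ξ) := by
  refine convexOn_of_d2 (convex_Icc _ _)
    (f' := fun ξ => (r - r^2) / 8 * Real.cos ξ - qk r ξ)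
    (f'' := fun ξ => (r - r^2) / 8 * (-Real.sin ξ)
      - (-(r * (1 - r^2) * Real.sin ξ) / (1 - 2 * r * Real.cos ξ + r ^ 2)^2)) ?_ ?_ ?_
  · intro x
    exact ((Real.hasDerivAt_sin x).const_mul _).sub (Ak_deriv h0 h1 x)
  · intro x
    exact ((Real.hasDerivAt_cos x).const_mul _).sub (qk_deriv h0 h1 x)
  · intro x hx
    have hs := Real.sin_nonneg_of_mem_Icc hx
    have hD := den_pos h0 h1 x
    have hD2 := den_le h0 x
    set D := 1 - 2 * r * Real.cos x + r ^ 2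
    have hDD : D^2 ≤ 8 * (1 + r) := by
      have : D^2 ≤ ((1+r)^2)^2 := by gcongr
      have : (1+r)^3 ≤ 2^3 := by
        have : 1 + r ≤ 2 := by linarith
        gcongr
      nlinarith
    have key : (r - r^2)/8 ≤ r * (1 - r^2) / D^2 := by
      rw [le_div_iff₀ (by positivity)]
      have : 0 ≤ (r - r^2) / 8 := by nlinarith
      calc (r - r^2)/8 * D^2 ≤ (r - r^2)/8 * (8 * (1+r)) := by gcongr
        _ = r * (1 - r^2) := by ring
    have e : (r - r^2) / 8 * (-Real.sin x) - (-(r * (1 - r^2) * Real.sin x) / D^2)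
      = (r * (1 - r^2) / D^2 - (r - r^2)/8) * Real.sin x := by ring
    rw [e]
    exact mul_nonneg (by linarith) hs

lemma Hk_conv {r : ℝ} (h0 : 0 ≤ r) (h1 : r < 1) (s : Set ℝ) (hs : Convex ℝ s) :
    ConvexOn ℝ s (fun ξ => Hk r ξ / 2 + ξ^2/8 - Real.pi * ξ / 4 - (1 - r)/16 * ξ^2) := by
  refine convexOn_of_d2 hs
    (f' := fun ξ => Ak r ξ / 2 + ξ/4 - Real.pi/4 - (1-r)/8 * ξ)
    (f'' := fun ξ => qk r ξ / 2 + 1/4 - (1-r)/8) ?_ ?_ ?_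
  · intro x
    have hsq : HasDerivAt (fun x : ℝ => x^2) (2 * x) x := by simpa using hasDerivAt_pow 2 x
    have h3 := ((((Hk_deriv h0 h1 x).div_const 2).add (hsq.div_const 8)).sub
      (((hasDerivAt_id x).const_mul Real.pi).div_const 4)).sub (hsq.const_mul ((1-r)/16))
    refine h3.congr_deriv ?_
    ring
  · intro x
    have h3 := ((((Ak_deriv h0 h1 x).div_const 2).add ((hasDerivAt_id x).div_const 4)).sub_const
      (Real.pi/4)).sub ((hasDerivAt_id x).const_mul ((1-r)/8))
    refine h3.congr_deriv ?_
    ring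
  · intro x _
    have hD := den_pos h0 h1 x
    have hD2 := den_le h0 x
    have e : qk r x / 2 + 1/4 = (1 - r^2) / (4 * (1 - 2 * r * Real.cos x + r ^ 2)) := by
      have h5 : Real.cos x * (2 * r) = 1 + r^2 - (1 - 2 * r * Real.cos x + r ^ 2) := by ring
      rw [qk]
      generalize 1 - 2 * r * Real.cos x + r ^ 2 = D at hD h5
      have hne := hD.ne'
      field_simp
      linear_combination 2 * h5
    rw [e]
    set D := 1 - 2 * r * Real.cos x + r ^ 2
    have : (1-r)/8 ≤ (1 - r^2) / (4 * D) := by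
      rw [le_div_iff₀ (by positivity)]
      have : D ≤ 2 * (1 + r) := by nlinarith
      calc (1-r)/8 * (4 * D) ≤ (1-r)/8 * (4 * (2 * (1 + r))) := by
            have : 0 ≤ (1-r)/8 := by linarith
            gcongr
        _ = 1 - r^2 := by ring
    linarith

lemma cos_sum {ξ : ℝ} (hξ : ξ ∈ Set.Icc 0 (2 * Real.pi)) :
    HasSum (fun k : ℕ => (1 - Real.cos (((k:ℝ)+1) * ξ)) / ((k:ℝ)+1)^2)
      (Real.pi * ξ / 2 - ξ^2/4) := by
  have hpi := Real.pi_pos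
  have hx : ξ / (2 * Real.pi) ∈ Set.Icc (0:ℝ) 1 :=
    ⟨div_nonneg hξ.1 (by positivity), by rw [div_le_one (by positivity)]; exact hξ.2⟩
  have h1 := hasSum_one_div_nat_pow_mul_cos one_ne_zero hx
  have h2 := hasSum_zeta_two.sub h1
  rw [← hasSum_nat_add_iff' 1] at h2
  have e : (Polynomial.map (algebraMap ℚ ℝ) (Polynomial.bernoulli (2 * 1))).eval (ξ / (2 * Real.pi))
      = (ξ / (2 * Real.pi))^2 - ξ / (2 * Real.pi) + 1/6 := by
    rw [Polynomial.bernoulli_def]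
    simp [Finset.sum_range_succ]
    ring
  rw [e] at h2
  convert! h2 using 1
  · funext k
    push_cast
    have : 2 * Real.pi * ((k:ℝ)+1) * (ξ / (2 * Real.pi)) = ((k:ℝ)+1) * ξ := by
      field_simp
    rw [this]; ring
  · simp
    field_simp
    ring

lemma sin_half_sq (k : ℕ) (x : ℝ) :
    Real.sin (((k:ℝ)+1) * x / 2)^2 = (1 - Real.cos (((k:ℝ)+1) * x)) / 2 := by
  rw [Real.sin_sq_eq_half_sub]
  have : 2 * (((k:ℝ)+1) * x / 2) = ((k:ℝ)+1) * x := by ring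
  rw [this]; ring

lemma abs_sin_half_sq (k : ℕ) (x : ℝ) : |Real.sin (((k:ℝ)+1) * x / 2)^2| ≤ 1 := by
  rw [abs_of_nonneg (sq_nonneg _)]; exact Real.sin_sq_le_one _

lemma sigma1_summable {α : ℝ} (hα : 0 < α) (x : ℝ) :
    Summable (fun k : ℕ => Real.sin (((k : ℝ) + 1) * x / 2) ^ 2 / ((k : ℝ) + 1) ^ (1 + α)) :=
  summable_bdd_rpow (by linarith) (fun k => abs_sin_half_sq k x)

lemma sigma1_cont {α : ℝ} (hα : 0 < α) : Continuous (sigma1 α) := by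
  refine continuous_tsum (u := fun k : ℕ => (((k:ℝ) + 1) ^ (1+α))⁻¹) (fun k => by fun_prop)
    (summable_shift_rpow (by linarith)) ?_
  intro k x
  have h : 0 < ((k:ℝ) + 1) ^ (1+α) := by positivity
  rw [norm_div, Real.norm_eq_abs, Real.norm_of_nonneg h.le, ← one_div]
  gcongr
  exact abs_sin_half_sq k x

lemma sigma1_neg (α x : ℝ) : sigma1 α (-x) = sigma1 α x := by
  unfold sigma1
  congr 1; funext k
  have : ((k:ℝ)+1) * (-x) / 2 = - (((k:ℝ)+1) * x / 2) := by ring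
  rw [this, Real.sin_neg, neg_sq]

lemma Hk_summable {r : ℝ} (h0 : 0 ≤ r) (h1 : r < 1) (ξ : ℝ) :
    Summable (fun k : ℕ => r ^ (k+1) / ((k:ℝ)+1)^2 * (1 - Real.cos (((k:ℝ)+1) * ξ))) := by
  refine Summable.of_norm_bounded ((geo_summable h0 h1).mul_right 2) fun k => ?_
  rw [norm_mul, Real.norm_of_nonneg (by positivity)]
  have hk : r ^ (k+1) / ((k:ℝ)+1)^2 ≤ r^(k+1) :=
    div_le_self (by positivity) (by nlinarith [Nat.cast_nonneg (α := ℝ) k])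
  have h2 : ‖1 - Real.cos (((k:ℝ)+1) * ξ)‖ ≤ 2 := by
    rw [Real.norm_eq_abs, abs_le]
    constructor <;> linarith [Real.cos_le_one (((k:ℝ)+1) * ξ), Real.neg_one_le_cos (((k:ℝ)+1) * ξ)]
  gcongr

lemma hasSum_of_eq {f g : ℕ → ℝ} {a b : ℝ} (h : HasSum f a) (hf : ∀ k, g k = f k) (hb : b = a) :
    HasSum g b := by
  rw [funext hf, hb]; exact h

lemma sigma1_conv_small {α : ℝ} (h0 : 0 < α) (h1 : α ≤ 1) :
    ConvexOn ℝ (Set.Icc 0 (2 * Real.pi)) (fun x => - sigma1 α x - (1/8)/2*x^2) := by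
  set b : ℕ → ℝ → ℝ := fun k x => -(Real.sin (((k:ℝ)+1) * x / 2)^2)
    - (if k = 0 then 1/16*x^2 else 0) with hb
  set w : ℕ → ℝ := fun k => (((k:ℝ)+1)^(1+α))⁻¹ with hw
  have hsum : ∀ x, HasSum (fun k => b k x * w k) (- sigma1 α x - (1/8)/2*x^2) := by
    intro x
    have a1 := (sigma1_summable h0 x).hasSum
    have a2 := hasSum_ite_eq (0:ℕ) ((1/8)/2*x^2)
    refine hasSum_of_eq (a1.neg.sub a2) ?_ rfl
    intro k
    by_cases hk : k = 0
    · subst hk; simp [hb, hw]; left; norm_num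
    · simp only [hb, hw, hk, if_false]; ring
  have key := convex_transfer (s := Set.Icc 0 (2 * Real.pi)) (b := b) (w := w) (convex_Icc _ _)
    ?_ (fun x _ => (hsum x).summable) ?_
  · exact key.congr fun x _ => (hsum x).tsum_eq
  · intro x _
    refine ⟨1 + 1/16*x^2, fun k => ?_⟩
    have h3 := abs_sin_half_sq k x
    rw [abs_of_nonneg (sq_nonneg _)] at h3
    have h4 := sq_nonneg (Real.sin (((k:ℝ)+1) * x / 2))
    have h5 := sq_nonneg x
    simp only [hb]
    split_ifs <;> rw [abs_le] <;> constructor <;> nlinarith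
  · intro d B hd x y u v hx hy hu hv huv hdk
    have := super2 h0 h1 hd ?_
    · simpa only [hw, div_eq_mul_inv] using this
    intro r hr0 hr1
    have hs2 : ∀ x ∈ Set.Icc 0 (2 * Real.pi),
        HasSum (fun k : ℕ => b k x * ((1 - r^(k+1)) / ((k:ℝ)+1)^2))
          (Hk r x / 2 + x^2/8 - Real.pi * x / 4 - (1 - r)/16 * x^2) := by
      intro x hx
      have a1 := (cos_sum hx).div_const 2
      have a2 := (Hk_summable hr0 hr1 x).hasSum.div_const 2
      have a3 := hasSum_ite_eq (0:ℕ) ((1 - r)/16 * x^2)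
      refine hasSum_of_eq ((a2.sub a1).sub a3) ?_ ?_
      · intro k
        simp only [hb, sin_half_sq]
        by_cases hk : k = 0
        · subst hk; simp; ring
        · simp only [hk, if_false]; ring
      · change _ = Hk r x / 2 - _ - _
        ring
    have hc : ConvexOn ℝ (Set.Icc 0 (2 * Real.pi))
        (fun x => ∑' k : ℕ, b k x * ((1 - r^(k+1)) / ((k:ℝ)+1)^2)) :=
      (Hk_conv hr0 hr1 _ (convex_Icc _ _)).congr fun x hx => (hs2 x hx).tsum_eq.symm
    have := convex_series hc (fun x hx => (hs2 x hx).summable) hx hy hu hv huv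
    simpa only [← hdk, ← mul_div_assoc] using this

def Sf (α x : ℝ) : ℝ := ∑' k : ℕ, Real.sin (((k:ℝ)+1) * x) / ((k:ℝ)+1)^α

def cA (α : ℝ) : ℝ := 1/8 - 1/4 * ((2:ℝ)^α)⁻¹

lemma cA_pos {α : ℝ} (h1 : 1 < α) : 0 < cA α := by
  have : (2:ℝ) < 2^α := by
    calc (2:ℝ) = 2^(1:ℝ) := by simp
      _ < 2^α := Real.rpow_lt_rpow_of_exponent_lt (by norm_num) h1
  have h2 : ((2:ℝ)^α)⁻¹ < 2⁻¹ := by gcongr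
  unfold cA
  linarith

lemma Sf_summable {α : ℝ} (hα : 1 < α) (x : ℝ) :
    Summable (fun k : ℕ => Real.sin (((k:ℝ)+1) * x) / ((k:ℝ)+1)^α) :=
  summable_bdd_rpow hα (fun _ => Real.abs_sin_le_one _)

lemma Sf_cont {α : ℝ} (hα : 1 < α) : Continuous (Sf α) := by
  refine continuous_tsum (u := fun k : ℕ => (((k:ℝ) + 1) ^ α)⁻¹) (fun k => by fun_prop)
    (summable_shift_rpow hα) ?_
  intro k x
  have h : 0 < ((k:ℝ) + 1) ^ α := by positivity
  rw [norm_div, Real.norm_eq_abs, Real.norm_of_nonneg h.le, ← one_div]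
  gcongr
  exact Real.abs_sin_le_one _

lemma sigma1_deriv {α : ℝ} (hα : 1 < α) (x : ℝ) : HasDerivAt (sigma1 α) (Sf α x / 2) x := by
  have key : HasDerivAt (fun x => ∑' k : ℕ, Real.sin (((k : ℝ) + 1) * x / 2) ^ 2
      / ((k : ℝ) + 1) ^ (1 + α))
    (∑' k : ℕ, Real.sin (((k:ℝ)+1) * x) / ((k:ℝ)+1)^α / 2) x := by
    refine hasDerivAt_tsum (u := fun k : ℕ => (((k:ℝ) + 1) ^ α)⁻¹)
      (g := fun (k:ℕ) x => Real.sin (((k : ℝ) + 1) * x / 2) ^ 2 / ((k : ℝ) + 1) ^ (1 + α))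
      (g' := fun (k:ℕ) x => Real.sin (((k:ℝ)+1) * x) / ((k:ℝ)+1)^α / 2)
      (summable_shift_rpow hα) ?_ ?_ (y₀ := 0) (by simp) x
    · intro k y
      have hk : 0 < (k:ℝ)+1 := by positivity
      have h3 := (((((hasDerivAt_id y).const_mul ((k:ℝ)+1)).div_const 2).sin).pow 2).div_const
        (((k : ℝ) + 1) ^ (1 + α))
      refine h3.congr_deriv ?_
      have e : ((k:ℝ)+1) * y = 2 * (((k:ℝ)+1) * y / 2) := by ring
      rw [e, Real.sin_two_mul, Real.rpow_add hk, Real.rpow_one]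
      have : 0 < ((k:ℝ) + 1) ^ α := by positivity
      simp only [id]
      field_simp
      ring
    · intro k y
      have h : 0 < ((k:ℝ) + 1) ^ α := by positivity
      rw [norm_div, norm_div, Real.norm_eq_abs, Real.norm_of_nonneg h.le, ← one_div]
      have h2 : |Real.sin (((k:ℝ)+1) * y)| / ((k:ℝ) + 1) ^ α ≤ 1 / ((k:ℝ) + 1) ^ α := by
        gcongr
        exact Real.abs_sin_le_one _
      have h3 : 0 ≤ |Real.sin (((k:ℝ)+1) * y)| / ((k:ℝ) + 1) ^ α := by positivity
      norm_num
      norm_num at h2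
      linarith
  rw [tsum_div_const] at key
  exact key

lemma Sf_conv {α : ℝ} (hα : 1 < α) :
    ConvexOn ℝ (Set.Icc 0 Real.pi) (fun x => cA α * Real.sin x - Sf α x) := by
  set b : ℕ → ℝ → ℝ := fun k x => (if k = 0 then 1/8 * Real.sin x else 0)
    - (if k = 1 then 1/4 * Real.sin x else 0) - Real.sin (((k:ℝ)+1) * x) with hb
  set w : ℕ → ℝ := fun k => (((k:ℝ)+1)^α)⁻¹ with hw
  have hsum : ∀ x, HasSum (fun k => b k x * w k) (cA α * Real.sin x - Sf α x) := by
    intro x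
    have a1 := (Sf_summable hα x).hasSum
    have a2 := hasSum_ite_eq (0:ℕ) (1/8 * Real.sin x)
    have a3 := hasSum_ite_eq (1:ℕ) (1/4 * ((2:ℝ)^α)⁻¹ * Real.sin x)
    refine hasSum_of_eq ((a2.sub a3).sub a1) ?_ ?_
    · intro k
      by_cases hk : k = 0
      · subst hk; simp [hb, hw]
      by_cases hk1 : k = 1
      · subst hk1; simp [hb, hw]
        norm_num
        ring
      · simp only [hb, hw, hk, hk1, if_false]; ring
    · change _ = _ - _ - Sf α x
      unfold cA; ring
  have key := convex_transfer (s := Set.Icc 0 Real.pi) (b := b) (w := w) (convex_Icc _ _)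
    ?_ (fun x _ => (hsum x).summable) ?_
  · exact key.congr fun x _ => (hsum x).tsum_eq
  · intro x _
    refine ⟨2, fun k => ?_⟩
    have h3 := abs_le.mp (Real.abs_sin_le_one (((k:ℝ)+1) * x))
    have h4 := abs_le.mp (Real.abs_sin_le_one x)
    simp only [hb]
    split_ifs <;> rw [abs_le] <;> constructor <;> linarith [h3.1, h3.2, h4.1, h4.2]
  · intro d B hd x y u v hx hy hu hv huv hdk
    have := super1 hα hd ?_
    · simpa only [hw, div_eq_mul_inv] using this
    intro r hr0 hr1
    have hs2 : ∀ x,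
        HasSum (fun k : ℕ => b k x * (r^(k+1) / ((k:ℝ)+1)))
          ((r - r^2) / 8 * Real.sin x - Ak r x) := by
      intro x
      have a1 := (Ak_summable hr0.le hr1 x).hasSum
      have a2 := hasSum_ite_eq (0:ℕ) (1/8 * r * Real.sin x)
      have a3 := hasSum_ite_eq (1:ℕ) (1/8 * r^2 * Real.sin x)
      refine hasSum_of_eq ((a2.sub a3).sub a1) ?_ ?_
      · intro k
        by_cases hk : k = 0
        · subst hk; simp [hb]; ring
        by_cases hk1 : k = 1
        · subst hk1; simp [hb]
          ring
        · simp only [hb, hk, hk1, if_false]; ring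
      · change _ = _ - _ - Ak r x
        ring
    have hc : ConvexOn ℝ (Set.Icc 0 Real.pi)
        (fun x => ∑' k : ℕ, b k x * (r^(k+1) / ((k:ℝ)+1))) :=
      (Ak_conv hr0.le hr1).congr fun x hx => (hs2 x).tsum_eq.symm
    have := convex_series hc (fun x hx => (hs2 x).summable) hx hy hu hv huv
    simpa only [← hdk, ← mul_div_assoc] using this

lemma sin_slope {x y : ℝ} (h0 : 0 ≤ x) (hxy : x < y) (hy : y ≤ Real.pi) :
    Real.cos y * (y - x) ≤ Real.sin y - Real.sin x ∧
      Real.sin y - Real.sin x ≤ Real.cos x * (y - x) := by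
  obtain ⟨z, hz, he⟩ := exists_hasDerivAt_eq_slope Real.sin Real.cos hxy
    Real.continuous_sin.continuousOn (fun z _ => Real.hasDerivAt_sin z)
  have hp : 0 < y - x := by linarith
  rw [eq_div_iff hp.ne'] at he
  rw [← he]
  have h1 : Real.cos y ≤ Real.cos z := Real.cos_le_cos_of_nonneg_of_le_pi (by linarith [hz.1]) hy hz.2.le
  have h2 : Real.cos z ≤ Real.cos x := Real.cos_le_cos_of_nonneg_of_le_pi h0 (by linarith [hz.2]) hz.1.le
  constructor <;> gcongr

lemma left_slope {S : ℝ → ℝ} {c x0 : ℝ} (hc : 0 < c)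
    (hconv : ConvexOn ℝ (Set.Icc 0 Real.pi) (fun x => c * Real.sin x - S x))
    (h0 : 0 < x0) (hpi : x0 < Real.pi) (hmax : ∀ x ∈ Set.Icc 0 Real.pi, S x ≤ S x0) :
    ∃ κ : ℝ, 0 < κ ∧ ∀ x y, 0 ≤ x → x < y → y < x0 → κ * (x0 - y) * (y - x) ≤ S y - S x := by
  set m0 := min (Real.sin (x0/4)) (Real.sin x0) with hm0
  have hm : 0 < m0 := lt_min (Real.sin_pos_of_pos_of_lt_pi (by linarith) (by linarith))
    (Real.sin_pos_of_pos_of_lt_pi h0 hpi)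
  have hp := Real.pi_pos
  refine ⟨c * m0 / Real.pi, by positivity, ?_⟩
  intro x y hx hxy hy
  set w := (y + x0)/2 with hw
  have hyw : y < w := by linarith
  have hwx : w < x0 := by linarith
  have s1 := hconv.slope_mono_adjacent (x := x) (y := y) (z := w) ⟨hx, by linarith⟩
    ⟨by linarith, by linarith⟩ hxy hyw
  have s2 := hconv.slope_mono_adjacent (x := y) (y := w) (z := x0) ⟨by linarith, by linarith⟩
    ⟨by linarith, by linarith⟩ hyw hwx
  have s3 := s1.trans s2
  have p1 := (sin_slope hx hxy (by linarith)).1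
  have p2 := (sin_slope (by linarith) hwx hpi.le).2
  have hw2 := hmax w ⟨by linarith, by linarith⟩
  have hA : (c * Real.sin x0 - S x0 - (c * Real.sin w - S w)) / (x0 - w) ≤ c * Real.cos w := by
    rw [div_le_iff₀ (by linarith)]
    nlinarith [mul_le_mul_of_nonneg_left p2 hc.le]
  have hB := s3.trans hA
  rw [div_le_iff₀ (by linarith)] at hB
  have hC : c * (Real.cos y - Real.cos w) * (y - x) ≤ S y - S x := by
    nlinarith [mul_le_mul_of_nonneg_left p1 hc.le]
  refine le_trans ?_ hC
  have hD : m0 / Real.pi * (x0 - y) ≤ Real.cos y - Real.cos w := by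
    have e : Real.cos y - Real.cos w
        = 2 * Real.sin ((3 * y + x0)/4) * Real.sin ((x0 - y)/4) := by
      rw [Real.cos_sub_cos]
      have e1 : (y + w)/2 = (3 * y + x0)/4 := by rw [hw]; ring
      have e2 : (y - w)/2 = -((x0 - y)/4) := by rw [hw]; ring
      rw [e1, e2, Real.sin_neg]; ring
    rw [e]
    have q1 : m0 ≤ Real.sin ((3 * y + x0)/4) :=
      strictConcaveOn_sin_Icc.concaveOn.min_le_of_mem_Icc (x := x0/4) (y := x0)
        ⟨by linarith, by linarith⟩ ⟨by linarith, by linarith⟩ ⟨by linarith, by linarith⟩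
    have q2 := Real.mul_le_sin (x := (x0 - y)/4) (by linarith) (by linarith)
    have q3 : 0 ≤ 2 / Real.pi * ((x0 - y)/4) := by
      have : 0 ≤ x0 - y := by linarith
      positivity
    calc m0 / Real.pi * (x0 - y) = 2 * m0 * (2 / Real.pi * ((x0 - y)/4)) := by ring
      _ ≤ _ := by
        have : 0 ≤ Real.sin ((3 * y + x0)/4) := hm.le.trans q1
        gcongr
  calc c * m0 / Real.pi * (x0 - y) * (y - x) = c * (m0 / Real.pi * (x0 - y)) * (y - x) := by ring
    _ ≤ _ := by
      have : 0 ≤ y - x := by linarith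
      gcongr

lemma two_slopes {S : ℝ → ℝ} {c : ℝ} (hc : 0 < c) (hcont : Continuous S)
    (hconv : ConvexOn ℝ (Set.Icc 0 Real.pi) (fun x => c * Real.sin x - S x))
    (hS0 : S 0 = 0) (hSpi : S Real.pi = 0) :
    ∃ x0 κ : ℝ, 0 < x0 ∧ x0 < Real.pi ∧ 0 < κ ∧
      (∀ x y, 0 ≤ x → x < y → y < x0 → κ * (x0 - y) * (y - x) ≤ S y - S x) ∧
      (∀ x y, x0 < x → x < y → y ≤ Real.pi → κ * (x - x0) * (y - x) ≤ S x - S y) := by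
  have hp := Real.pi_pos
  obtain ⟨x0, hx0, hmax⟩ := isCompact_Icc.exists_isMaxOn (s := Set.Icc 0 Real.pi)
    ⟨0, le_rfl, hp.le⟩ hcont.continuousOn
  have hmax' : ∀ x ∈ Set.Icc 0 Real.pi, S x ≤ S x0 := fun x hx => hmax hx
  have hhalf : 0 < S (Real.pi/2) := by
    have := hconv.2 (Set.left_mem_Icc.mpr hp.le) (Set.right_mem_Icc.mpr hp.le)
      (show (0:ℝ) ≤ 1/2 by norm_num) (show (0:ℝ) ≤ 1/2 by norm_num) (by norm_num)
    simp only [smul_eq_mul, hS0, hSpi, Real.sin_zero, Real.sin_pi] at this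
    have e : (1/2 : ℝ) * 0 + 1/2 * Real.pi = Real.pi/2 := by ring
    rw [e, Real.sin_pi_div_two] at this
    linarith
  have hpos : 0 < S x0 := hhalf.trans_le (hmax' _ ⟨by linarith, by linarith⟩)
  have h0 : 0 < x0 := lt_of_le_of_ne hx0.1 (by rintro rfl; linarith)
  have h1 : x0 < Real.pi := lt_of_le_of_ne hx0.2 (by rintro rfl; linarith)
  obtain ⟨k1, hk1, H1⟩ := left_slope hc hconv h0 h1 hmax'
  have hconv2 : ConvexOn ℝ (Set.Icc 0 Real.pi) (fun x => c * Real.sin x - S (Real.pi - x)) := by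
    refine ⟨convex_Icc _ _, ?_⟩
    intro x hx y hy a b ha hb hab
    have := hconv.2 (show Real.pi - x ∈ Set.Icc 0 Real.pi from ⟨by linarith [hx.2], by linarith [hx.1]⟩)
      (show Real.pi - y ∈ Set.Icc 0 Real.pi from ⟨by linarith [hy.2], by linarith [hy.1]⟩) ha hb hab
    simp only [smul_eq_mul, Real.sin_pi_sub] at this ⊢
    have e : a * (Real.pi - x) + b * (Real.pi - y) = Real.pi - (a * x + b * y) := by
      linear_combination Real.pi * hab
    rw [e, Real.sin_pi_sub] at this
    exact this
  obtain ⟨k2, hk2, H2⟩ := left_slope (S := fun x => S (Real.pi - x)) (x0 := Real.pi - x0) hc hconv2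
    (by linarith) (by linarith) (by
      intro x hx
      simp only [sub_sub_cancel]
      exact hmax' _ ⟨by linarith [hx.2], by linarith [hx.1]⟩)
  refine ⟨x0, min k1 k2, h0, h1, lt_min hk1 hk2, ?_, ?_⟩
  · intro x y hx hxy hy
    refine le_trans ?_ (H1 x y hx hxy hy)
    have : 0 ≤ y - x := by linarith
    have : 0 ≤ x0 - y := by linarith
    gcongr
    exact min_le_left _ _
  · intro x y hx hxy hy
    have := H2 (Real.pi - y) (Real.pi - x) (by linarith) (by linarith) (by linarith)
    simp only [sub_sub_cancel] at this
    refine le_trans ?_ this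
    have e1 : Real.pi - x0 - (Real.pi - x) = x - x0 := by ring
    have e2 : Real.pi - x - (Real.pi - y) = y - x := by ring
    rw [e1, e2]
    have : 0 ≤ y - x := by linarith
    have : 0 ≤ x - x0 := by linarith
    gcongr
    exact min_le_right _ _

lemma strong_convex {g G : ℝ → ℝ} {a b m : ℝ} (hg : ∀ x, HasDerivAt g (G x) x)
    (hG : ∀ x y, a < x → x < y → y < b → m * (y - x) ≤ G y - G x) :
    ConvexOn ℝ (Set.Icc a b) (fun x => g x - m/2*x^2) := by
  have hd : ∀ x, HasDerivAt (fun x => g x - m/2*x^2) (G x - m * x) x := by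
    intro x
    have hsq : HasDerivAt (fun x : ℝ => x^2) (2 * x) x := by simpa using hasDerivAt_pow 2 x
    refine ((hg x).sub (hsq.const_mul (m/2))).congr_deriv ?_
    ring
  have e : deriv (fun x => g x - m/2*x^2) = fun x => G x - m * x := funext fun x => (hd x).deriv
  refine MonotoneOn.convexOn_of_deriv (convex_Icc _ _)
    (fun x _ => (hd x).continuousAt.continuousWithinAt)
    (fun x _ => (hd x).differentiableAt.differentiableWithinAt) ?_
  rw [e, interior_Icc]
  intro x hx y hy hxy
  rcases hxy.eq_or_lt with rfl | h
  · exact le_rfl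
  · have := hG x y hx.1 h hy.2
    simp only
    linarith

lemma phase_cont {g : ℝ → ℝ} (hg : Continuous g) (n t : ℝ) :
    Continuous (fun x => Complex.exp (Complex.I * ((n * x - g x * t : ℝ) : ℂ))) := by
  fun_prop

lemma phase_norm (r : ℝ) : ‖Complex.exp (Complex.I * (r : ℂ))‖ = 1 := by
  rw [mul_comm]; exact Complex.norm_exp_ofReal_mul_I r

lemma phase_triv (g : ℝ → ℝ) (n t : ℝ) {a b : ℝ} (hab : a ≤ b) :
    ‖∫ x in a..b, Complex.exp (Complex.I * ((n * x - g x * t : ℝ) : ℂ))‖ ≤ b - a := by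
  have := intervalIntegral.norm_integral_le_of_norm_le_const (a := a) (b := b) (C := 1)
    (f := fun x => Complex.exp (Complex.I * ((n * x - g x * t : ℝ) : ℂ)))
    (fun x _ => (phase_norm _).le)
  rwa [one_mul, abs_of_nonneg (by linarith)] at this

lemma Sf_zero (α : ℝ) : Sf α 0 = 0 := by simp [Sf]
lemma Sf_pi (α : ℝ) : Sf α Real.pi = 0 := by
  unfold Sf
  have : ∀ k : ℕ, Real.sin (((k:ℝ)+1) * Real.pi) = 0 := by
    intro k
    have := Real.sin_nat_mul_pi (k+1)
    push_cast at this; exact this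
  simp [this]

lemma large_decay {α : ℝ} (hα : 1 < α) : ∃ M : ℝ, 0 < M ∧ ∀ n t : ℝ, 1 ≤ |t| →
    ‖∫ x in (0:ℝ)..Real.pi, Complex.exp (Complex.I * ((n * x - sigma1 α x * t : ℝ) : ℂ))‖
      ≤ M * |t| ^ (-(1/3 : ℝ)) := by
  obtain ⟨x0, κ, h0, hpi, hκ, HL, HR⟩ :=
    two_slopes (cA_pos hα) (Sf_cont hα) (Sf_conv hα) (Sf_zero α) (Sf_pi α)
  have hσc : Continuous (sigma1 α) := sigma1_cont (by linarith)
  set δ0 := min x0 (Real.pi - x0) with hδ0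
  have hδ0p : 0 < δ0 := lt_min h0 (by linarith)
  refine ⟨16 / √(κ * δ0 / 2) + 2 * δ0, by positivity, ?_⟩
  intro n t ht
  have htp : 0 < |t| := by linarith
  have ht0 : t ≠ 0 := abs_pos.mp htp
  set s := |t| ^ (1/3 : ℝ) with hs
  have hs1 : 1 ≤ s := Real.one_le_rpow ht (by norm_num)
  have hsp : 0 < s := by linarith
  have hs3 : s ^ 3 = |t| := by
    rw [hs, ← Real.rpow_natCast, ← Real.rpow_mul htp.le]; norm_num
  have hneg : |t| ^ (-(1/3 : ℝ)) = s⁻¹ := by rw [Real.rpow_neg htp.le]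
  rw [hneg]
  set δ := δ0 / s with hδ
  have hδp : 0 < δ := by positivity
  have hδle : δ ≤ δ0 := div_le_self hδ0p.le hs1
  have hδ1 : δ ≤ x0 := hδle.trans (min_le_left _ _)
  have hδ2 : δ ≤ Real.pi - x0 := hδle.trans (min_le_right _ _)
  set m := κ * δ / 2 with hm
  have hmp : 0 < m := by positivity
  have hsqrt : √(m * |t|) = √(κ * δ0 / 2) * s := by
    have : m * |t| = (κ * δ0 / 2) * s^2 := by
      rw [hm, hδ, ← hs3]; field_simp
    rw [this, Real.sqrt_mul (by positivity), Real.sqrt_sq hsp.le]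
  have B1 := vdc_phase (g := sigma1 α) (a := 0) (b := x0 - δ) n t (by linarith) hmp ht0
    hσc.continuousOn (Or.inl (strong_convex (G := fun x => Sf α x / 2) (sigma1_deriv hα) (by
      intro x y hx hxy hy
      have h1 := HL x y hx.le hxy (by linarith)
      have h2 : κ * δ * (y - x) ≤ κ * (x0 - y) * (y - x) := by
        have : 0 ≤ y - x := by linarith
        have : δ ≤ x0 - y := by linarith
        gcongr
      rw [hm]; linarith)))
  have B3 := vdc_phase (g := sigma1 α) (a := x0 + δ) (b := Real.pi) n t (by linarith) hmp ht0
    hσc.continuousOn (Or.inr (strong_convex (g := fun x => - sigma1 α x)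
      (G := fun x => - (Sf α x / 2)) (fun x => (sigma1_deriv hα x).neg) (by
      intro x y hx hxy hy
      have h1 := HR x y (by linarith) hxy hy.le
      have h2 : κ * δ * (y - x) ≤ κ * (x - x0) * (y - x) := by
        have : 0 ≤ y - x := by linarith
        have : δ ≤ x - x0 := by linarith
        gcongr
      rw [hm]; linarith)))
  have B2 := phase_triv (sigma1 α) n t (a := x0 - δ) (b := x0 + δ) (by linarith)
  have hci := fun a b => (phase_cont hσc n t).intervalIntegrable (μ := volume) a b
  rw [← intervalIntegral.integral_add_adjacent_intervals (hci 0 (x0 + δ)) (hci (x0+δ) Real.pi),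
    ← intervalIntegral.integral_add_adjacent_intervals (hci 0 (x0 - δ)) (hci (x0-δ) (x0+δ))]
  rw [hsqrt] at B1 B3
  refine (norm_add₃_le).trans ?_
  have e : (16 / √(κ * δ0 / 2) + 2 * δ0) * s⁻¹ = 8 / (√(κ * δ0 / 2) * s) + (x0 + δ - (x0 - δ))
      + 8 / (√(κ * δ0 / 2) * s) := by
    rw [hδ]
    have : 0 < √(κ * δ0 / 2) := by positivity
    field_simp
    ring
  rw [e]
  gcongr

lemma small_decay {α : ℝ} (h0 : 0 < α) (h1 : α ≤ 1) : ∃ M : ℝ, 0 < M ∧ ∀ n t : ℝ, 1 ≤ |t| →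
    ‖∫ x in (0:ℝ)..Real.pi, Complex.exp (Complex.I * ((n * x - sigma1 α x * t : ℝ) : ℂ))‖
      ≤ M * |t| ^ (-(1/2 : ℝ)) := by
  refine ⟨8 / √(1/8), by positivity, ?_⟩
  intro n t ht
  have htp : 0 < |t| := by linarith
  have hp := Real.pi_pos
  have B := vdc_phase (g := sigma1 α) (a := 0) (b := Real.pi) (m := 1/8) n t hp.le (by norm_num)
    (abs_pos.mp htp) (sigma1_cont h0).continuousOn (Or.inr ((sigma1_conv_small h0 h1).subset
      (Set.Icc_subset_Icc le_rfl (by linarith)) (convex_Icc _ _)))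
  refine B.trans_eq ?_
  rw [Real.sqrt_mul (by norm_num), Real.rpow_neg htp.le, ← Real.sqrt_eq_rpow]
  field_simp

lemma Kker_le {α : ℝ} (h0 : 0 < α) {M t : ℝ} (h : ∀ n : ℝ,
    ‖∫ x in (0:ℝ)..Real.pi, Complex.exp (Complex.I * ((n * x - sigma1 α x * t : ℝ) : ℂ))‖ ≤ M)
    (n : ℤ) : ‖Kker α t n‖ ≤ M := by
  have hp := Real.pi_gt_three
  have hM : 0 ≤ M := (norm_nonneg _).trans (h 0)
  have hci := fun a b => (phase_cont (sigma1_cont h0) (n:ℝ) t).intervalIntegrable (μ := volume) a b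
  unfold Kker
  rw [← intervalIntegral.integral_add_adjacent_intervals (hci (-Real.pi) 0) (hci 0 Real.pi)]
  have e : (∫ x in (-Real.pi)..0, Complex.exp (Complex.I * (((n:ℝ) * x - sigma1 α x * t : ℝ) : ℂ)))
      = ∫ x in (0:ℝ)..Real.pi, Complex.exp (Complex.I * (((-n:ℝ) * x - sigma1 α x * t : ℝ) : ℂ)) := by
    have := intervalIntegral.integral_comp_neg (a := 0) (b := Real.pi)
      (fun x => Complex.exp (Complex.I * (((n:ℝ) * x - sigma1 α x * t : ℝ) : ℂ)))
    rw [neg_zero] at this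
    rw [← this]
    simp only [sigma1_neg, mul_neg, neg_mul]
  rw [e, norm_smul, Real.norm_of_nonneg (by positivity)]
  have h1 := h (-n)
  have h2 := h n
  have h3 := norm_add_le_of_le h1 h2
  have h4 : (2 * Real.pi)⁻¹ ≤ 1/2 := by
    rw [one_div]; gcongr; linarith
  calc _ ≤ 1/2 * (M + M) := by gcongr
    _ = M := by ring

lemma final_aux {α ρ M : ℝ} (h0 : 0 < α) (hρ0 : 0 ≤ ρ) (hρ : ρ ≤ 1) (hM : 0 < M)
    (h : ∀ n t : ℝ, 1 ≤ |t| →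
    ‖∫ x in (0:ℝ)..Real.pi, Complex.exp (Complex.I * ((n * x - sigma1 α x * t : ℝ) : ℂ))‖
      ≤ M * |t| ^ (-ρ)) (t : ℝ) (n : ℤ) :
    ‖Kker α t n‖ ≤ (2 * (M + Real.pi)) * (1 + |t|) ^ (-ρ) := by
  have hp := Real.pi_pos
  have h2 : (2:ℝ)^ρ ≤ 2 := by
    calc (2:ℝ)^ρ ≤ 2^(1:ℝ) := Real.rpow_le_rpow_of_exponent_le (by norm_num) hρ
      _ = 2 := by simp
  have key : ∀ T : ℝ, 0 < T → 1 + |t| ≤ 2 * T → T ^ (-ρ) ≤ 2 * (1 + |t|)^(-ρ) := by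
    intro T hT hle
    have hpos : 0 < 1 + |t| := by positivity
    rw [Real.rpow_neg hT.le, Real.rpow_neg hpos.le]
    have h3 : (1 + |t|)^ρ ≤ 2 * T^ρ := by
      calc (1 + |t|)^ρ ≤ (2 * T)^ρ := Real.rpow_le_rpow hpos.le hle hρ0
        _ = 2^ρ * T^ρ := Real.mul_rpow (by norm_num) hT.le
        _ ≤ 2 * T^ρ := by gcongr
    have h4 : 0 < T^ρ := by positivity
    have h5 : 0 < (1 + |t|)^ρ := by positivity
    rw [← one_div, ← div_eq_mul_inv, div_le_div_iff₀ h4 h5]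
    linarith
  have hq : 0 ≤ (1 + |t|)^(-ρ) := by positivity
  rcases le_or_gt 1 |t| with ht | ht
  · refine (Kker_le h0 (fun n => h n t ht) n).trans ?_
    have := key |t| (by linarith) (by linarith)
    nlinarith
  · refine (Kker_le h0 (M := Real.pi) (fun n => (phase_triv (sigma1 α) n t hp.le).trans (by simp)) n).trans ?_
    have := key 1 one_pos (by linarith)
    rw [Real.one_rpow] at this
    nlinarith

theorem stmt16 (α : ℝ) (hα : 0 < α) :
    ∃ C : ℝ, 0 < C ∧
      ∀ (t : ℝ) (φ : ℤ → ℂ), Summable (fun n : ℤ => ‖φ n‖) →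
        ∀ n : ℤ,
          ‖Uprop α t φ n‖ ≤
            C * (1 + |t|) ^ (-(if α ≤ 1 then (1 : ℝ) / 2 else 1 / 3)) *
              ∑' m : ℤ, ‖φ m‖ := by
  have key : ∃ C : ℝ, 0 < C ∧ ∀ (t : ℝ) (n : ℤ), ‖Kker α t n‖ ≤
      C * (1 + |t|) ^ (-(if α ≤ 1 then (1 : ℝ) / 2 else 1 / 3)) := by
    have hp := Real.pi_pos
    split_ifs with h
    · obtain ⟨M, hM, H⟩ := small_decay hα h
      exact ⟨_, by positivity, final_aux hα (by norm_num) (by norm_num) hM H⟩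
    · obtain ⟨M, hM, H⟩ := large_decay (not_le.mp h)
      exact ⟨_, by positivity, final_aux hα (by norm_num) (by norm_num) hM H⟩
  obtain ⟨C, hC, H⟩ := key
  refine ⟨C, hC, ?_⟩
  intro t φ hφ n
  unfold Uprop
  have hb : ∀ m : ℤ, ‖Kker α t (n - m) * φ m‖ ≤
      C * (1 + |t|) ^ (-(if α ≤ 1 then (1 : ℝ) / 2 else 1 / 3)) * ‖φ m‖ := by
    intro m
    rw [norm_mul]
    gcongr
    exact H t (n - m)
  have := tsum_of_norm_bounded ((hφ.mul_left
    (C * (1 + |t|) ^ (-(if α ≤ 1 then (1 : ℝ) / 2 else 1 / 3)))).hasSum) hb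
  rwa [tsum_mul_left] at this
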